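/- The 5-dimensional nilpotent Lie algebra L_{5,9} = ⟨x₁,…,x₅ : [x₁,x₂]=x₃, [x₁,x₃]=x₄, [x₂,x₃]=x₅⟩ has Schur multiplier of dimension 3; with n = 5, m = 3, c = 3, this equals (1/2)(n−m−1)(n+m) − Σ_{i=2}^{min(n−m,c)} (n−m−i) − 1. -/

import Mathlib

open Module

/-- The dimension of the Schur multiplier `M(L) = (R ∩ F²)/[R,F]` of a Lie algebra `L`,
computed from a free presentation `π : FreeLieAlgebra K X → L` (with `R = ker π` and
`F² = [F,F]`). -/
noncomputable def lieSchurMultiplierDim (K : Type) [Field K] (X : Type) {L : Type}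
    [LieRing L] [LieAlgebra K L] (π : FreeLieAlgebra K X →ₗ⁅K⁆ L) : ℕ :=
  let F := FreeLieAlgebra K X
  let R : LieIdeal K F := π.ker
  let F2 : LieIdeal K F := LieModule.lowerCentralSeries K F F 1
  Module.finrank K
    (↥((R ⊓ F2 : LieIdeal K F) : Submodule K F) ⧸
      (Submodule.comap ((R ⊓ F2 : LieIdeal K F) : Submodule K F).subtype
        ((⁅R, (⊤ : LieIdeal K F)⁆ : LieIdeal K F) : Submodule K F)))

/-- `L` is nilpotent of nilpotency class exactly `c`: in the paper's notation
`γ_{c+1}(L) = 0` and `γ_k(L) ≠ 0` for `k ≤ c` (Mathlib's `lowerCentralSeries` is indexed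
so that `γ_{k+1}(L) = lowerCentralSeries K L L k`). -/
def lieNilpotencyClass (K : Type) [Field K] (L : Type) [LieRing L] [LieAlgebra K L]
    (c : ℕ) : Prop :=
  LieModule.lowerCentralSeries K L L c = ⊥ ∧
    ∀ k < c, LieModule.lowerCentralSeries K L L k ≠ ⊥

/-- The dimension of the derived subalgebra `L² = [L,L]`. -/
noncomputable def lieDerivedDim (K : Type) [Field K] (L : Type) [LieRing L]
    [LieAlgebra K L] : ℕ :=
  Module.finrank K
    ↥((LieModule.lowerCentralSeries K L L 1 : LieSubmodule K L L) : Submodule K L)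

/-- Rai's upper bound `(1/2)(n−m−1)(n+m) − Σ_{i=2}^{min(n−m,c)} (n−m−i)`. -/
def raiBound (n m c : ℕ) : ℤ :=
  ((n : ℤ) - m - 1) * ((n : ℤ) + m) / 2
    - ∑ i ∈ Finset.Icc 2 (min (n - m) c), ((n : ℤ) - m - (i : ℤ))


/-- The Lie algebra `L_{5,9} = ⟨x₁,…,x₅ : [x₁,x₂]=x₃, [x₁,x₃]=x₄, [x₂,x₃]=x₅⟩`,
all other brackets of generators trivial. -/
noncomputable def lieL59 (K : Type) [Field K] : Type :=
  let F := FreeLieAlgebra K (Fin 5)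
  let x : Fin 5 → F := FreeLieAlgebra.of K
  F ⧸ LieSubmodule.lieSpan K F
    {⁅x 0, x 1⁆ - x 2, ⁅x 0, x 2⁆ - x 3, ⁅x 1, x 2⁆ - x 4,
     ⁅x 0, x 3⁆, ⁅x 0, x 4⁆, ⁅x 1, x 3⁆, ⁅x 1, x 4⁆, ⁅x 2, x 3⁆, ⁅x 2, x 4⁆, ⁅x 3, x 4⁆}

noncomputable instance (K : Type) [Field K] : LieRing (lieL59 K) := by
  unfold lieL59; infer_instance
noncomputable instance (K : Type) [Field K] : LieAlgebra K (lieL59 K) := by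
  unfold lieL59; infer_instance

/-!
A stem extension `p : E → L` that maps to every central extension of `L` computes the Schur
multiplier. Indeed, let `π : F → L` be a free presentation with kernel `R`, and lift it to
`φ : F → E`. Then `φ` kills `[R, F]` because `ker p` is central, and it maps `R ∩ F²` onto `ker p`
because `ker p ≤ E²` and `F → E` is surjective modulo the centre. Conversely the central extension
`F ⧸ [R, F] → L` receives a morphism `ψ` from `E`, and `ψ ∘ φ` differs from the projection
`F → F ⧸ [R, F]` by central elements, hence agrees with it on `F²`; so the kernel of `φ` on
`R ∩ F²` is exactly `[R, F]`, and `M(L) ≅ ker p`.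

`L_{5,9}` is the free nilpotent Lie algebra of class `3` on two generators. The free nilpotent Lie
algebra of class `4` maps onto it, with kernel spanned by the three basic commutators of weight
`4`, and it maps to every central extension because lifts of the generators have central
fourfold commutators `[s,[t,[u,w]]]`.
-/

universe u

section CentralExtensions

variable {R L L' M : Type*} [CommRing R] [LieRing L] [LieAlgebra R L]
  [LieRing L'] [LieAlgebra R L']
  [AddCommGroup M] [Module R M] [LieRingModule L M]

theorem lie_mem_lowerCentralSeries_succ {k : ℕ} (x : L) {m : M}
    (hm : m ∈ LieModule.lowerCentralSeries R L M k) :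
    ⁅x, m⁆ ∈ LieModule.lowerCentralSeries R L M (k + 1) := by
  rw [LieModule.lowerCentralSeries_succ]
  exact LieSubmodule.lie_mem_lie (LieSubmodule.mem_top x) hm

theorem lie_mem_lowerCentralSeries_one (x : L) (m : M) :
    ⁅x, m⁆ ∈ LieModule.lowerCentralSeries R L M 1 :=
  lie_mem_lowerCentralSeries_succ x (LieSubmodule.mem_top m)

theorem lowerCentralSeries_succ_le_iff [LieModule R L M] {k : ℕ} {S : Submodule R M} :
    (LieModule.lowerCentralSeries R L M (k + 1)).toSubmodule ≤ S ↔
      ∀ x : L, ∀ m ∈ LieModule.lowerCentralSeries R L M k, ⁅x, m⁆ ∈ S := by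
  rw [LieModule.lowerCentralSeries_succ, LieSubmodule.lieIdeal_oper_eq_linear_span',
    Submodule.span_le]
  constructor
  · intro h x m hm
    exact h ⟨x, LieSubmodule.mem_top x, m, hm, rfl⟩
  · rintro h _ ⟨x, -, m, hm, rfl⟩
    exact h x m hm

theorem lie_eq_zero_of_mem_center_left {z : L} (hz : z ∈ LieAlgebra.center R L) (x : L) :
    ⁅z, x⁆ = 0 := by
  rw [← lie_skew, (LieModule.mem_maxTrivSubmodule R L L z).1 hz x, neg_zero]

theorem lie_congr_mod_center {x x' y y' : L} (hx : x - x' ∈ LieAlgebra.center R L)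
    (hy : y - y' ∈ LieAlgebra.center R L) : ⁅x, y⁆ = ⁅x', y'⁆ := by
  have hx' : ⁅x, y⁆ = ⁅x', y⁆ := by
    rw [← sub_eq_zero, ← sub_lie, lie_eq_zero_of_mem_center_left hx]
  have hy' : ⁅x', y⁆ = ⁅x', y'⁆ := by
    rw [← sub_eq_zero, ← lie_sub, (LieModule.mem_maxTrivSubmodule R L L _).1 hy]
  exact hx'.trans hy'

theorem eqOn_lowerCentralSeries_one_of_sub_mem_center {f g : L →ₗ⁅R⁆ L'}
    (h : ∀ x, f x - g x ∈ LieAlgebra.center R L') :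
    Set.EqOn f g (LieModule.lowerCentralSeries R L L 1) := by
  suffices hle : (LieModule.lowerCentralSeries R L L 1).toSubmodule ≤
      LinearMap.eqLocus (f : L →ₗ[R] L') (g : L →ₗ[R] L') from fun x hx => hle hx
  rw [lowerCentralSeries_succ_le_iff]
  intro x y _
  change f ⁅x, y⁆ = g ⁅x, y⁆
  rw [LieHom.map_lie, LieHom.map_lie, lie_congr_mod_center (h x) (h y)]

theorem lowerCentralSeries_one_le_map_of_surjective_mod_center {f : L →ₗ⁅R⁆ L'}
    (h : ∀ y, ∃ x, y - f x ∈ LieAlgebra.center R L') :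
    (LieModule.lowerCentralSeries R L' L' 1).toSubmodule ≤
      (LieModule.lowerCentralSeries R L L 1).toSubmodule.map (f : L →ₗ[R] L') := by
  rw [lowerCentralSeries_succ_le_iff]
  intro y y' _
  obtain ⟨x, hx⟩ := h y
  obtain ⟨x', hx'⟩ := h y'
  refine ⟨⁅x, x'⁆, lie_mem_lowerCentralSeries_one x x', ?_⟩
  rw [lie_congr_mod_center hx hx']
  exact LieHom.map_lie f x x'

end CentralExtensions

section Quotients

variable {R L L' : Type*} [CommRing R] [LieRing L] [LieAlgebra R L] [LieRing L'] [LieAlgebra R L']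

/-- The projection `L → L ⧸ I` as a morphism of Lie algebras (`LieSubmodule.Quotient.mk'` is only
a morphism of `L`-modules). -/
def lieIdealQuotientMk (I : LieIdeal R L) : L →ₗ⁅R⁆ L ⧸ I where
  __ := (LieSubmodule.Quotient.mk' I : L →ₗ[R] L ⧸ I)
  map_lie' := rfl

theorem lieIdealQuotientMk_surjective (I : LieIdeal R L) :
    Function.Surjective (lieIdealQuotientMk I) :=
  LieSubmodule.Quotient.surjective_mk' I

theorem lieIdealQuotientMk_eq_zero {I : LieIdeal R L} {x : L} :
    lieIdealQuotientMk I x = 0 ↔ x ∈ I :=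
  LieSubmodule.Quotient.mk_eq_zero I

/-- The morphism of Lie algebras `L ⧸ I → L'` induced by a morphism `L → L'` vanishing on `I`. -/
def lieIdealQuotientLift (I : LieIdeal R L) (f : L →ₗ⁅R⁆ L') (h : I ≤ f.ker) : L ⧸ I →ₗ⁅R⁆ L' where
  __ := I.toSubmodule.liftQ (f : L →ₗ[R] L') h
  map_lie' {x y} := by
    obtain ⟨x, rfl⟩ := lieIdealQuotientMk_surjective I x
    obtain ⟨y, rfl⟩ := lieIdealQuotientMk_surjective I y
    exact LieHom.map_lie f x y

theorem lieIdealQuotientLift_mk {I : LieIdeal R L} {f : L →ₗ⁅R⁆ L'} (h : I ≤ f.ker) (x : L) :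
    lieIdealQuotientLift I f h (lieIdealQuotientMk I x) = f x :=
  rfl

theorem lieIdealQuotientMk_mem_center_of_mem {I : LieIdeal R L} {r : L} (hr : r ∈ I) :
    lieIdealQuotientMk ⁅I, (⊤ : LieIdeal R L)⁆ r ∈
      LieAlgebra.center R (L ⧸ ⁅I, (⊤ : LieIdeal R L)⁆) := by
  rw [LieModule.mem_maxTrivSubmodule]
  intro y
  obtain ⟨y, rfl⟩ := lieIdealQuotientMk_surjective _ y
  rw [← LieHom.map_lie, lieIdealQuotientMk_eq_zero, LieSubmodule.lie_comm]
  exact LieSubmodule.lie_mem_lie (LieSubmodule.mem_top y) hr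

end Quotients

section SchurMultiplier

/-- A stem extension `p : E → L` (a central extension with kernel inside `E²`) that maps to every
central extension of `L` over `L`. In the paper's language `E` is a cover of `L`, and the
kernel of `p` is its Schur multiplier. -/
structure IsUniversalStemExtension {R : Type*} [CommRing R] {E L : Type u} [LieRing E]
    [LieAlgebra R E] [LieRing L] [LieAlgebra R L] (p : E →ₗ⁅R⁆ L) : Prop where
  surjective : Function.Surjective p
  ker_le_center : p.ker ≤ LieAlgebra.center R E
  ker_le_lowerCentralSeries_one : p.ker ≤ LieModule.lowerCentralSeries R E E 1
  exists_lift : ∀ {Q : Type u} [LieRing Q] [LieAlgebra R Q] (q : Q →ₗ⁅R⁆ L),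
    Function.Surjective q → q.ker ≤ LieAlgebra.center R Q → ∃ ψ : E →ₗ⁅R⁆ Q, ∀ v, q (ψ v) = p v

section

variable {R F E L : Type*} [CommRing R] [LieRing F] [LieAlgebra R F] [LieRing E] [LieAlgebra R E]
  [LieRing L] [LieAlgebra R L] {p : E →ₗ⁅R⁆ L} {π : F →ₗ⁅R⁆ L} {φ : F →ₗ⁅R⁆ E}

theorem exists_freeLieAlgebra_lift {X : Type*} (hp : Function.Surjective p)
    (π : FreeLieAlgebra R X →ₗ⁅R⁆ L) :
    ∃ φ : FreeLieAlgebra R X →ₗ⁅R⁆ E, ∀ w, p (φ w) = π w := by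
  obtain ⟨s, hs⟩ := hp.hasRightInverse
  have hcomp : p.comp (FreeLieAlgebra.lift R fun i => s (π (FreeLieAlgebra.of R i))) = π :=
    FreeLieAlgebra.hom_ext fun i => by
      rw [LieHom.comp_apply, FreeLieAlgebra.lift_of_apply, hs]
  exact ⟨_, fun w => LieHom.congr_fun hcomp w⟩

theorem lie_ker_top_le_ker_of_ker_le_center (hp : p.ker ≤ LieAlgebra.center R E)
    (hφ : ∀ w, p (φ w) = π w) : ⁅π.ker, (⊤ : LieIdeal R F)⁆ ≤ φ.ker := by
  rw [LieSubmodule.lie_le_iff]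
  intro r hr y _
  have hφr : φ r ∈ p.ker := by rw [LieHom.mem_ker, hφ, LieHom.mem_ker.1 hr]
  rw [LieHom.mem_ker, LieHom.map_lie, lie_eq_zero_of_mem_center_left (hp hφr)]

theorem exists_mem_ker_inf_lowerCentralSeries_one_map_eq (hπ : Function.Surjective π)
    (hpc : p.ker ≤ LieAlgebra.center R E)
    (hpd : p.ker ≤ LieModule.lowerCentralSeries R E E 1) (hφ : ∀ w, p (φ w) = π w)
    {z : E} (hz : z ∈ p.ker) :
    ∃ w ∈ π.ker ⊓ LieModule.lowerCentralSeries R F F 1, φ w = z := by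
  have hmod : ∀ y, ∃ x, y - φ x ∈ LieAlgebra.center R E := by
    intro y
    obtain ⟨x, hx⟩ := hπ (p y)
    exact ⟨x, hpc (by rw [LieHom.mem_ker, map_sub, hφ, hx, sub_self])⟩
  obtain ⟨w, hw, rfl⟩ := lowerCentralSeries_one_le_map_of_surjective_mod_center hmod (hpd hz)
  refine ⟨w, (LieSubmodule.mem_inf _ _ _).2 ⟨?_, hw⟩, rfl⟩
  rw [LieHom.mem_ker, ← hφ]
  exact LieHom.mem_ker.1 hz

end

namespace IsUniversalStemExtension

theorem mem_lie_ker_top_of_map_eq_zero {R : Type*} [CommRing R] {F E L : Type u} [LieRing F]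
    [LieAlgebra R F] [LieRing E] [LieAlgebra R E] [LieRing L] [LieAlgebra R L]
    {p : E →ₗ⁅R⁆ L} (hp : IsUniversalStemExtension p) {π : F →ₗ⁅R⁆ L}
    (hπ : Function.Surjective π) {φ : F →ₗ⁅R⁆ E} (hφ : ∀ w, p (φ w) = π w) {w : F}
    (hw : w ∈ LieModule.lowerCentralSeries R F F 1) (hφw : φ w = 0) :
    w ∈ ⁅π.ker, (⊤ : LieIdeal R F)⁆ := by
  let J : LieIdeal R F := ⁅π.ker, (⊤ : LieIdeal R F)⁆
  let q : F ⧸ J →ₗ⁅R⁆ L := lieIdealQuotientLift J π (LieSubmodule.lie_le_left _ _)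
  have q_mk (x : F) : q (lieIdealQuotientMk J x) = π x := lieIdealQuotientLift_mk _ x
  have q_surjective : Function.Surjective q := fun y =>
    (hπ y).imp' (lieIdealQuotientMk J) fun x hx => (q_mk x).trans hx
  have ker_q_le : q.ker ≤ LieAlgebra.center R (F ⧸ J) := by
    intro y hy
    obtain ⟨x, rfl⟩ := lieIdealQuotientMk_surjective J y
    exact lieIdealQuotientMk_mem_center_of_mem (by rwa [LieHom.mem_ker, q_mk] at hy)
  obtain ⟨ψ, hψ⟩ := hp.exists_lift q q_surjective ker_q_le
  have sub_mem_center (x : F) :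
      (ψ.comp φ) x - lieIdealQuotientMk J x ∈ LieAlgebra.center R (F ⧸ J) :=
    ker_q_le (by rw [LieHom.mem_ker, map_sub, LieHom.comp_apply, hψ, hφ, q_mk, sub_self])
  rw [← lieIdealQuotientMk_eq_zero,
    ← eqOn_lowerCentralSeries_one_of_sub_mem_center sub_mem_center hw, LieHom.comp_apply, hφw,
    map_zero]

theorem lieSchurMultiplierDim_eq {K X E L : Type} [Field K] [LieRing E] [LieAlgebra K E]
    [LieRing L] [LieAlgebra K L] {p : E →ₗ⁅K⁆ L} (hp : IsUniversalStemExtension p)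
    {π : FreeLieAlgebra K X →ₗ⁅K⁆ L} (hπ : Function.Surjective π) :
    lieSchurMultiplierDim K X π = finrank K p.ker := by
  obtain ⟨φ, hφ⟩ := exists_freeLieAlgebra_lift hp.surjective π
  let S := (π.ker ⊓ LieModule.lowerCentralSeries K _ _ 1).toSubmodule
  have map_mem_ker (w : S) : φ w ∈ p.ker := by
    rw [LieHom.mem_ker, hφ]
    exact LieHom.mem_ker.1 w.2.1
  let f : S →ₗ[K] p.ker :=
    ((φ : FreeLieAlgebra K X →ₗ[K] E).domRestrict S).codRestrict p.ker.toSubmodule map_mem_ker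
  have f_surjective : Function.Surjective f := by
    rintro ⟨z, hz⟩
    obtain ⟨w, hw, rfl⟩ := exists_mem_ker_inf_lowerCentralSeries_one_map_eq hπ
      hp.ker_le_center hp.ker_le_lowerCentralSeries_one hφ hz
    exact ⟨⟨w, hw⟩, rfl⟩
  have ker_f : LinearMap.ker f = Submodule.comap S.subtype
      (⁅π.ker, (⊤ : LieIdeal K (FreeLieAlgebra K X))⁆ : LieIdeal K _).toSubmodule := by
    ext w
    rw [LinearMap.mem_ker, Submodule.mem_comap, ← Subtype.coe_inj]
    exact ⟨fun h => hp.mem_lie_ker_top_of_map_eq_zero hπ hφ w.2.2 h,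
      fun h => lie_ker_top_le_ker_of_ker_le_center hp.ker_le_center hφ h⟩
  calc lieSchurMultiplierDim K X π = finrank K (S ⧸ LinearMap.ker f) := by rw [ker_f]; rfl
    _ = finrank K p.ker := (f.quotKerEquivOfSurjective f_surjective).finrank_eq

end IsUniversalStemExtension

theorem lieSchurMultiplierDim_equiv_comp {K X L L' : Type} [Field K] [LieRing L] [LieAlgebra K L]
    [LieRing L'] [LieAlgebra K L'] (e : L ≃ₗ⁅K⁆ L') (π : FreeLieAlgebra K X →ₗ⁅K⁆ L) :
    lieSchurMultiplierDim K X (e.toLieHom.comp π) = lieSchurMultiplierDim K X π := by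
  have ker_eq : (e.toLieHom.comp π).ker = π.ker := by
    ext w
    exact EmbeddingLike.map_eq_zero_iff (f := e.toLinearEquiv) (x := π w)
  rw [lieSchurMultiplierDim, lieSchurMultiplierDim, ker_eq]

end SchurMultiplier

section LieEquiv

theorem map_lowerCentralSeries_toSubmodule {R L L' : Type*} [CommRing R] [LieRing L]
    [LieAlgebra R L] [LieRing L'] [LieAlgebra R L'] (e : L ≃ₗ⁅R⁆ L') (k : ℕ) :
    (LieModule.lowerCentralSeries R L L k).toSubmodule.map (e.toLinearEquiv : L →ₗ[R] L') =
      (LieModule.lowerCentralSeries R L' L' k).toSubmodule := by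
  rw [← LieIdeal.lowerCentralSeries_map_eq k (f := e.toLieHom) e.surjective]
  exact (LieIdeal.coe_map_of_surjective e.surjective).symm

variable {K L L' : Type} [Field K] [LieRing L] [LieAlgebra K L] [LieRing L'] [LieAlgebra K L']

theorem lieDerivedDim_eq_finrank :
    lieDerivedDim K L = finrank K (LieModule.lowerCentralSeries K L L 1).toSubmodule := rfl

theorem lieDerivedDim_congr (e : L ≃ₗ⁅K⁆ L') : lieDerivedDim K L = lieDerivedDim K L' := by
  rw [lieDerivedDim_eq_finrank, lieDerivedDim_eq_finrank, ← map_lowerCentralSeries_toSubmodule e]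
  exact (LinearEquiv.finrank_map_eq e.toLinearEquiv _).symm

theorem lieNilpotencyClass_congr (e : L ≃ₗ⁅K⁆ L') {c : ℕ} :
    lieNilpotencyClass K L c ↔ lieNilpotencyClass K L' c := by
  have eq_bot_iff_eq_bot (k : ℕ) : LieModule.lowerCentralSeries K L L k = ⊥ ↔
      LieModule.lowerCentralSeries K L' L' k = ⊥ := by
    rw [← LieSubmodule.toSubmodule_eq_bot, ← LieSubmodule.toSubmodule_eq_bot,
      ← map_lowerCentralSeries_toSubmodule e]
    exact Submodule.map_eq_bot_iff.symm
  simp only [lieNilpotencyClass, ne_eq, eq_bot_iff_eq_bot]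

end LieEquiv

theorem finrank_ker_funLeft {K ι κ : Type*} [Field K] [Fintype ι] [Fintype κ] {f : ι → κ}
    (hf : Function.Injective f) :
    finrank K (LinearMap.ker (LinearMap.funLeft K K f)) = Fintype.card κ - Fintype.card ι := by
  have hsurj := LinearMap.funLeft_surjective_of_injective K K f hf
  have hrank := (LinearMap.funLeft K K f).finrank_range_add_finrank_ker
  rw [LinearMap.range_eq_top.2 hsurj, finrank_top, finrank_fintype_fun_eq_card,
    finrank_fintype_fun_eq_card] at hrank
  lia

theorem lie_lie_lie_self_left_comm {L : Type*} [LieRing L] (y x : L) :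
    ⁅y, ⁅x, ⁅x, y⁆⁆⁆ = ⁅x, ⁅y, ⁅x, y⁆⁆⁆ := by
  rw [leibniz_lie y, ← lie_skew y x, neg_lie, lie_self, neg_zero, zero_add]

/-- The coordinate model of `L_{5,9}`, which is the free nilpotent Lie algebra of class `3` on two
generators `a`, `b`: the coordinates refer to the basis
`a, b, [a,b], [a,[a,b]], [b,[a,b]]`. -/
def L59Model (R : Type*) : Type _ := Fin 5 → R

/-- The free nilpotent Lie algebra of class `4` on two generators `a`, `b`, in coordinates for the
basis `a, b, [a,b], [a,[a,b]], [b,[a,b]], [a,[a,[a,b]]], [a,[b,[a,b]]], [b,[b,[a,b]]]`. -/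
def L59Cover (R : Type*) : Type _ := Fin 8 → R

namespace L59Model

variable {R : Type*}

@[ext]
theorem ext {u v : L59Model R} (h : ∀ i, u i = v i) : u = v := funext h

variable [CommRing R]

instance : AddCommGroup (L59Model R) := inferInstanceAs (AddCommGroup (Fin 5 → R))

instance : Module R (L59Model R) := inferInstanceAs (Module R (Fin 5 → R))

@[simp]
theorem zero_apply (i : Fin 5) : (0 : L59Model R) i = 0 := rfl

@[simp]
theorem add_apply (u v : L59Model R) (i : Fin 5) : (u + v) i = u i + v i := rfl

@[simp]
theorem smul_apply (t : R) (v : L59Model R) (i : Fin 5) : (t • v) i = t * v i := rfl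

instance : Bracket (L59Model R) (L59Model R) where
  bracket u v := ![0, 0, u 0 * v 1 - u 1 * v 0, u 0 * v 2 - u 2 * v 0, u 1 * v 2 - u 2 * v 1]

theorem lie_apply (u v : L59Model R) (i : Fin 5) : ⁅u, v⁆ i =
    ![0, 0, u 0 * v 1 - u 1 * v 0, u 0 * v 2 - u 2 * v 0, u 1 * v 2 - u 2 * v 1] i := rfl

instance : LieRing (L59Model R) where
  add_lie u v w := by ext i; fin_cases i <;> simp [lie_apply] <;> ring
  lie_add u v w := by ext i; fin_cases i <;> simp [lie_apply] <;> ring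
  lie_self u := by ext i; fin_cases i <;> simp [lie_apply] <;> ring
  leibniz_lie u v w := by ext i; fin_cases i <;> simp [lie_apply] <;> ring

instance : LieAlgebra R (L59Model R) where
  lie_smul t u v := by ext i; fin_cases i <;> simp [lie_apply] <;> ring

/-- The generator `a` of the model. -/
def a (R : Type*) [CommRing R] : L59Model R := ![1, 0, 0, 0, 0]

/-- The generator `b` of the model. -/
def b (R : Type*) [CommRing R] : L59Model R := ![0, 1, 0, 0, 0]

theorem a_apply (i : Fin 5) : a R i = ![1, 0, 0, 0, 0] i := rfl

theorem b_apply (i : Fin 5) : b R i = ![0, 1, 0, 0, 0] i := rfl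

theorem eq_sum_commutators (v : L59Model R) :
    v = v 0 • a R + v 1 • b R + v 2 • ⁅a R, b R⁆ + v 3 • ⁅a R, ⁅a R, b R⁆⁆ +
      v 4 • ⁅b R, ⁅a R, b R⁆⁆ := by
  ext i; fin_cases i <;> simp [lie_apply, a_apply, b_apply]

theorem lie_lie_lie_lie_eq_zero (u v w x : L59Model R) : ⁅u, ⁅v, ⁅w, x⁆⁆⁆ = 0 := by
  ext i; fin_cases i <;> simp [lie_apply]

/-- The morphism sending the generators `a`, `b` of the model to `x`, `y`. -/
def lift {Q : Type*} [LieRing Q] [LieAlgebra R Q] (x y : Q)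
    (hxx : ⁅x, ⁅x, ⁅x, y⁆⁆⁆ = 0) (hxy : ⁅x, ⁅y, ⁅x, y⁆⁆⁆ = 0) (hyy : ⁅y, ⁅y, ⁅x, y⁆⁆⁆ = 0) :
    L59Model R →ₗ⁅R⁆ Q where
  toFun v := v 0 • x + v 1 • y + v 2 • ⁅x, y⁆ + v 3 • ⁅x, ⁅x, y⁆⁆ + v 4 • ⁅y, ⁅x, y⁆⁆
  map_add' u v := by simp only [add_apply]; module
  map_smul' t v := by simp only [smul_apply, RingHom.id_apply]; module
  map_lie' {u v} := by
    have lie_y_x : ⁅y, x⁆ = -⁅x, y⁆ := (lie_skew y x).symm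
    -- `lie_lie` right-norms all brackets; the hypotheses then kill every word of weight over three.
    simp only [lie_apply, add_lie, lie_add, smul_lie, lie_smul, lie_lie, lie_y_x,
      lie_lie_lie_self_left_comm y x, hxx, hxy, hyy, lie_self, lie_neg, lie_sub, lie_zero,
      Matrix.cons_val]
    module

theorem lift_apply {Q : Type*} [LieRing Q] [LieAlgebra R Q] {x y : Q}
    (hxx : ⁅x, ⁅x, ⁅x, y⁆⁆⁆ = 0) (hxy : ⁅x, ⁅y, ⁅x, y⁆⁆⁆ = 0) (hyy : ⁅y, ⁅y, ⁅x, y⁆⁆⁆ = 0)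
    (v : L59Model R) : lift x y hxx hxy hyy v =
      v 0 • x + v 1 • y + v 2 • ⁅x, y⁆ + v 3 • ⁅x, ⁅x, y⁆⁆ + v 4 • ⁅y, ⁅x, y⁆⁆ :=
  rfl

/-- The abelianization of the model, in coordinates for the images of `a` and `b`. -/
def abelianization (R : Type*) [CommRing R] : L59Model R →ₗ[R] (Fin 2 → R) :=
  LinearMap.funLeft R R (Fin.castLE (by decide : 2 ≤ 5))

theorem mem_ker_abelianization {v : L59Model R} :
    v ∈ LinearMap.ker (abelianization R) ↔ v 0 = 0 ∧ v 1 = 0 := by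
  rw [LinearMap.mem_ker, funext_iff]
  exact Fin.forall_fin_two

theorem lowerCentralSeries_one_eq_ker :
    (LieModule.lowerCentralSeries R (L59Model R) (L59Model R) 1).toSubmodule =
      LinearMap.ker (abelianization R) := by
  refine le_antisymm (lowerCentralSeries_succ_le_iff.2 fun u v _ => ?_) fun v hv => ?_
  · exact mem_ker_abelianization.2 ⟨rfl, rfl⟩
  · obtain ⟨hv0, hv1⟩ := mem_ker_abelianization.1 hv
    rw [eq_sum_commutators v, hv0, hv1, zero_smul, zero_smul, zero_add, zero_add]
    exact add_mem (add_mem (SMulMemClass.smul_mem _ (lie_mem_lowerCentralSeries_one _ _))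
      (SMulMemClass.smul_mem _ (lie_mem_lowerCentralSeries_one _ _)))
      (SMulMemClass.smul_mem _ (lie_mem_lowerCentralSeries_one _ _))

theorem lowerCentralSeries_two_le_center :
    LieModule.lowerCentralSeries R (L59Model R) (L59Model R) 2 ≤
      LieAlgebra.center R (L59Model R) := by
  rw [← LieSubmodule.toSubmodule_le_toSubmodule, lowerCentralSeries_succ_le_iff]
  intro v w hw
  rw [← LieSubmodule.mem_toSubmodule, lowerCentralSeries_one_eq_ker, mem_ker_abelianization] at hw
  refine (LieModule.mem_maxTrivSubmodule R _ _ _).2 fun u => ?_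
  ext i; fin_cases i <;> simp [lie_apply, hw]

theorem lowerCentralSeries_three_eq_bot :
    LieModule.lowerCentralSeries R (L59Model R) (L59Model R) 3 = ⊥ := by
  rw [← LieSubmodule.toSubmodule_eq_bot, eq_bot_iff, lowerCentralSeries_succ_le_iff]
  intro u v hv
  exact (LieModule.mem_maxTrivSubmodule R _ _ _).1 (lowerCentralSeries_two_le_center hv) u

theorem lowerCentralSeries_two_ne_bot [Nontrivial R] :
    LieModule.lowerCentralSeries R (L59Model R) (L59Model R) 2 ≠ ⊥ := by
  intro h
  have mem_two : ⁅a R, ⁅a R, b R⁆⁆ ∈ LieModule.lowerCentralSeries R (L59Model R) (L59Model R) 2 :=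
    lie_mem_lowerCentralSeries_succ _ (lie_mem_lowerCentralSeries_one _ _)
  rw [h, LieSubmodule.mem_bot] at mem_two
  simpa [lie_apply, a_apply, b_apply] using congrFun mem_two 3

theorem lieNilpotencyClass_three (K : Type) [Field K] : lieNilpotencyClass K (L59Model K) 3 := by
  refine ⟨lowerCentralSeries_three_eq_bot, fun k hk h => lowerCentralSeries_two_ne_bot (R := K) ?_⟩
  rw [eq_bot_iff, ← h]
  exact LieModule.antitone_lowerCentralSeries K _ _ (Nat.le_of_lt_succ hk)

theorem lieDerivedDim_eq_three (K : Type) [Field K] : lieDerivedDim K (L59Model K) = 3 := by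
  rw [lieDerivedDim_eq_finrank, lowerCentralSeries_one_eq_ker]
  exact finrank_ker_funLeft (Fin.castLE_injective _)

end L59Model

namespace L59Cover

variable {R : Type*}

@[ext]
theorem ext {u v : L59Cover R} (h : ∀ i, u i = v i) : u = v := funext h

variable [CommRing R]

instance : AddCommGroup (L59Cover R) := inferInstanceAs (AddCommGroup (Fin 8 → R))

instance : Module R (L59Cover R) := inferInstanceAs (Module R (Fin 8 → R))

@[simp]
theorem zero_apply (i : Fin 8) : (0 : L59Cover R) i = 0 := rfl

@[simp]
theorem add_apply (u v : L59Cover R) (i : Fin 8) : (u + v) i = u i + v i := rfl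

@[simp]
theorem smul_apply (t : R) (v : L59Cover R) (i : Fin 8) : (t • v) i = t * v i := rfl

-- The basis vector `[a,[b,[a,b]]]` equals `[b,[a,[a,b]]]`, whence the two terms in coordinate `6`.
instance : Bracket (L59Cover R) (L59Cover R) where
  bracket u v := ![0, 0, u 0 * v 1 - u 1 * v 0, u 0 * v 2 - u 2 * v 0, u 1 * v 2 - u 2 * v 1,
    u 0 * v 3 - u 3 * v 0, (u 0 * v 4 - u 4 * v 0) + (u 1 * v 3 - u 3 * v 1),
    u 1 * v 4 - u 4 * v 1]

theorem lie_apply (u v : L59Cover R) (i : Fin 8) : ⁅u, v⁆ i =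
    ![0, 0, u 0 * v 1 - u 1 * v 0, u 0 * v 2 - u 2 * v 0, u 1 * v 2 - u 2 * v 1,
      u 0 * v 3 - u 3 * v 0, (u 0 * v 4 - u 4 * v 0) + (u 1 * v 3 - u 3 * v 1),
      u 1 * v 4 - u 4 * v 1] i := rfl

instance : LieRing (L59Cover R) where
  add_lie u v w := by ext i; fin_cases i <;> simp [lie_apply] <;> ring
  lie_add u v w := by ext i; fin_cases i <;> simp [lie_apply] <;> ring
  lie_self u := by ext i; fin_cases i <;> simp [lie_apply] <;> ring
  leibniz_lie u v w := by ext i; fin_cases i <;> simp [lie_apply] <;> ring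

instance : LieAlgebra R (L59Cover R) where
  lie_smul t u v := by ext i; fin_cases i <;> simp [lie_apply] <;> ring

/-- The generator `a` of the cover. -/
def a (R : Type*) [CommRing R] : L59Cover R := ![1, 0, 0, 0, 0, 0, 0, 0]

/-- The generator `b` of the cover. -/
def b (R : Type*) [CommRing R] : L59Cover R := ![0, 1, 0, 0, 0, 0, 0, 0]

theorem a_apply (i : Fin 8) : a R i = ![1, 0, 0, 0, 0, 0, 0, 0] i := rfl

theorem b_apply (i : Fin 8) : b R i = ![0, 1, 0, 0, 0, 0, 0, 0] i := rfl

theorem eq_sum_commutators (v : L59Cover R) :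
    v = v 0 • a R + v 1 • b R + v 2 • ⁅a R, b R⁆ + v 3 • ⁅a R, ⁅a R, b R⁆⁆ +
      v 4 • ⁅b R, ⁅a R, b R⁆⁆ + v 5 • ⁅a R, ⁅a R, ⁅a R, b R⁆⁆⁆ +
      v 6 • ⁅a R, ⁅b R, ⁅a R, b R⁆⁆⁆ + v 7 • ⁅b R, ⁅b R, ⁅a R, b R⁆⁆⁆ := by
  ext i; fin_cases i <;> simp [lie_apply, a_apply, b_apply]

/-- The morphism sending the generators `a`, `b` of the cover to `x`, `y`. -/
def lift {Q : Type*} [LieRing Q] [LieAlgebra R Q] (x y : Q)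
    (hxx : ⁅x, ⁅x, ⁅x, y⁆⁆⁆ ∈ LieAlgebra.center R Q)
    (hxy : ⁅x, ⁅y, ⁅x, y⁆⁆⁆ ∈ LieAlgebra.center R Q)
    (hyy : ⁅y, ⁅y, ⁅x, y⁆⁆⁆ ∈ LieAlgebra.center R Q) : L59Cover R →ₗ⁅R⁆ Q where
  toFun v := v 0 • x + v 1 • y + v 2 • ⁅x, y⁆ + v 3 • ⁅x, ⁅x, y⁆⁆ + v 4 • ⁅y, ⁅x, y⁆⁆
    + v 5 • ⁅x, ⁅x, ⁅x, y⁆⁆⁆ + v 6 • ⁅x, ⁅y, ⁅x, y⁆⁆⁆ + v 7 • ⁅y, ⁅y, ⁅x, y⁆⁆⁆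
  map_add' u v := by simp only [add_apply]; module
  map_smul' t v := by simp only [smul_apply, RingHom.id_apply]; module
  map_lie' {u v} := by
    rw [LieModule.mem_maxTrivSubmodule] at hxx hxy hyy
    have lie_y_x : ⁅y, x⁆ = -⁅x, y⁆ := (lie_skew y x).symm
    -- `lie_lie` right-norms all brackets; the hypotheses then kill every word of weight over four.
    simp only [lie_apply, add_lie, lie_add, smul_lie, lie_smul, lie_lie, lie_y_x,
      lie_lie_lie_self_left_comm y x, hxx, hxy, hyy, lie_self, lie_neg, lie_sub, lie_zero,
      Matrix.cons_val]
    module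

theorem lift_apply {Q : Type*} [LieRing Q] [LieAlgebra R Q] {x y : Q}
    (hxx : ⁅x, ⁅x, ⁅x, y⁆⁆⁆ ∈ LieAlgebra.center R Q)
    (hxy : ⁅x, ⁅y, ⁅x, y⁆⁆⁆ ∈ LieAlgebra.center R Q)
    (hyy : ⁅y, ⁅y, ⁅x, y⁆⁆⁆ ∈ LieAlgebra.center R Q) (v : L59Cover R) :
    lift x y hxx hxy hyy v =
      v 0 • x + v 1 • y + v 2 • ⁅x, y⁆ + v 3 • ⁅x, ⁅x, y⁆⁆ + v 4 • ⁅y, ⁅x, y⁆⁆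
        + v 5 • ⁅x, ⁅x, ⁅x, y⁆⁆⁆ + v 6 • ⁅x, ⁅y, ⁅x, y⁆⁆⁆ + v 7 • ⁅y, ⁅y, ⁅x, y⁆⁆⁆ :=
  rfl

/-- The projection of the cover onto the model, killing the commutators of weight four. -/
def toModel (R : Type*) [CommRing R] : L59Cover R →ₗ⁅R⁆ L59Model R where
  __ := LinearMap.funLeft R R (Fin.castLE (by decide : 5 ≤ 8))
  map_lie' {u v} := by ext i; fin_cases i <;> rfl

theorem toModel_apply (v : L59Cover R) (i : Fin 5) :
    toModel R v i = v (Fin.castLE (by decide) i) := rfl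

theorem mem_ker_toModel {v : L59Cover R} :
    v ∈ (toModel R).ker ↔ v 0 = 0 ∧ v 1 = 0 ∧ v 2 = 0 ∧ v 3 = 0 ∧ v 4 = 0 := by
  rw [LieHom.mem_ker, L59Model.ext_iff]
  simp [Fin.forall_fin_succ, toModel_apply]

theorem toModel_surjective : Function.Surjective (toModel R) :=
  LinearMap.funLeft_surjective_of_injective R R _ (Fin.castLE_injective _)

theorem ker_toModel_le_center : (toModel R).ker ≤ LieAlgebra.center R (L59Cover R) := by
  intro v hv
  rw [mem_ker_toModel] at hv
  refine (LieModule.mem_maxTrivSubmodule R _ _ _).2 fun u => ?_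
  ext i; fin_cases i <;> simp [lie_apply, hv]

theorem ker_toModel_le_lowerCentralSeries_one :
    (toModel R).ker ≤ LieModule.lowerCentralSeries R (L59Cover R) (L59Cover R) 1 := by
  intro v hv
  obtain ⟨hv0, hv1, hv2, hv3, hv4⟩ := mem_ker_toModel.1 hv
  have eq_sum := eq_sum_commutators v
  simp only [hv0, hv1, hv2, hv3, hv4, zero_smul, zero_add] at eq_sum
  rw [eq_sum]
  exact add_mem (add_mem (SMulMemClass.smul_mem _ (lie_mem_lowerCentralSeries_one _ _))
    (SMulMemClass.smul_mem _ (lie_mem_lowerCentralSeries_one _ _)))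
    (SMulMemClass.smul_mem _ (lie_mem_lowerCentralSeries_one _ _))

theorem exists_lift_of_ker_le_center {Q : Type*} [LieRing Q] [LieAlgebra R Q]
    {q : Q →ₗ⁅R⁆ L59Model R} (hq : Function.Surjective q) (hqc : q.ker ≤ LieAlgebra.center R Q) :
    ∃ ψ : L59Cover R →ₗ⁅R⁆ Q, ∀ v, q (ψ v) = toModel R v := by
  obtain ⟨x, hx⟩ := hq (L59Model.a R)
  obtain ⟨y, hy⟩ := hq (L59Model.b R)
  have lie_mem_center (s t u w : Q) : ⁅s, ⁅t, ⁅u, w⁆⁆⁆ ∈ LieAlgebra.center R Q :=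
    hqc (by simp only [LieHom.mem_ker, LieHom.map_lie, L59Model.lie_lie_lie_lie_eq_zero])
  refine ⟨lift x y (lie_mem_center _ _ _ _) (lie_mem_center _ _ _ _) (lie_mem_center _ _ _ _),
    fun v => ?_⟩
  rw [L59Model.eq_sum_commutators (toModel R v)]
  simp only [lift_apply, map_add, map_smul, LieHom.map_lie, hx, hy,
    L59Model.lie_lie_lie_lie_eq_zero, smul_zero, add_zero]
  rfl

theorem isUniversalStemExtension_toModel : IsUniversalStemExtension (toModel R) where
  surjective := toModel_surjective
  ker_le_center := ker_toModel_le_center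
  ker_le_lowerCentralSeries_one := ker_toModel_le_lowerCentralSeries_one
  exists_lift _ hq hqc := exists_lift_of_ker_le_center hq hqc

theorem finrank_ker_toModel (K : Type*) [Field K] : finrank K (toModel K).ker = 3 :=
  finrank_ker_funLeft (K := K) (Fin.castLE_injective (by decide : 5 ≤ 8))

end L59Cover

namespace lieL59

variable {K : Type} [Field K]

/-- The relators of the presentation defining `lieL59`. -/
def relators (K : Type) [Field K] : Set (FreeLieAlgebra K (Fin 5)) :=
  let x : Fin 5 → FreeLieAlgebra K (Fin 5) := FreeLieAlgebra.of K
  {⁅x 0, x 1⁆ - x 2, ⁅x 0, x 2⁆ - x 3, ⁅x 1, x 2⁆ - x 4,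
    ⁅x 0, x 3⁆, ⁅x 0, x 4⁆, ⁅x 1, x 3⁆, ⁅x 1, x 4⁆, ⁅x 2, x 3⁆, ⁅x 2, x 4⁆, ⁅x 3, x 4⁆}

/-- The projection of the free Lie algebra onto `L_{5,9}`. -/
noncomputable def mk (K : Type) [Field K] : FreeLieAlgebra K (Fin 5) →ₗ⁅K⁆ lieL59 K :=
  lieIdealQuotientMk (LieSubmodule.lieSpan K _ (relators K))

theorem mk_surjective : Function.Surjective (mk K) :=
  lieIdealQuotientMk_surjective _

theorem mk_eq_zero_of_mem_relators {w : FreeLieAlgebra K (Fin 5)} (hw : w ∈ relators K) :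
    mk K w = 0 :=
  lieIdealQuotientMk_eq_zero.2 (LieSubmodule.subset_lieSpan hw)

/-- The generators of `L_{5,9}`: the paper's `x₁, …, x₅` are `gen K 0, …, gen K 4`. -/
noncomputable def gen (K : Type) [Field K] (i : Fin 5) : lieL59 K := mk K (FreeLieAlgebra.of K i)

theorem lie_gen_zero_one : ⁅gen K 0, gen K 1⁆ = gen K 2 := by
  rw [← sub_eq_zero]
  exact mk_eq_zero_of_mem_relators (by simp [relators])

theorem lie_gen_zero_two : ⁅gen K 0, gen K 2⁆ = gen K 3 := by
  rw [← sub_eq_zero]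
  exact mk_eq_zero_of_mem_relators (by simp [relators])

theorem lie_gen_one_two : ⁅gen K 1, gen K 2⁆ = gen K 4 := by
  rw [← sub_eq_zero]
  exact mk_eq_zero_of_mem_relators (by simp [relators])

theorem lie_gen_zero_three : ⁅gen K 0, gen K 3⁆ = 0 :=
  mk_eq_zero_of_mem_relators (by simp [relators])

theorem lie_gen_zero_four : ⁅gen K 0, gen K 4⁆ = 0 :=
  mk_eq_zero_of_mem_relators (by simp [relators])

theorem lie_gen_one_four : ⁅gen K 1, gen K 4⁆ = 0 :=
  mk_eq_zero_of_mem_relators (by simp [relators])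

/-- The morphism from the model sending its generators `a`, `b` to `x₁`, `x₂`. -/
noncomputable def ofModel (K : Type) [Field K] : L59Model K →ₗ⁅K⁆ lieL59 K :=
  L59Model.lift (gen K 0) (gen K 1)
    (by rw [lie_gen_zero_one, lie_gen_zero_two, lie_gen_zero_three])
    (by rw [lie_gen_zero_one, lie_gen_one_two, lie_gen_zero_four])
    (by rw [lie_gen_zero_one, lie_gen_one_two, lie_gen_one_four])

theorem ofModel_apply (v : L59Model K) :
    ofModel K v =
      v 0 • gen K 0 + v 1 • gen K 1 + v 2 • gen K 2 + v 3 • gen K 3 + v 4 • gen K 4 := by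
  rw [ofModel, L59Model.lift_apply, lie_gen_zero_one, lie_gen_zero_two, lie_gen_one_two]

/-- The basis of the model corresponding to the generators of `L_{5,9}`. -/
def modelGen (K : Type) [Field K] : Fin 5 → L59Model K :=
  ![L59Model.a K, L59Model.b K, ⁅L59Model.a K, L59Model.b K⁆,
    ⁅L59Model.a K, ⁅L59Model.a K, L59Model.b K⁆⁆, ⁅L59Model.b K, ⁅L59Model.a K, L59Model.b K⁆⁆]

theorem lieSpan_relators_le_ker_lift_modelGen :
    LieSubmodule.lieSpan K _ (relators K) ≤ (FreeLieAlgebra.lift K (modelGen K)).ker := by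
  rw [LieSubmodule.lieSpan_le]
  intro w hw
  rw [SetLike.mem_coe, LieHom.mem_ker]
  rcases hw with rfl | rfl | rfl | rfl | rfl | rfl | rfl | rfl | rfl | rfl <;>
  · simp only [map_sub, LieHom.map_lie, FreeLieAlgebra.lift_of_apply]
    ext i; fin_cases i <;>
      simp [modelGen, L59Model.lie_apply, L59Model.a_apply, L59Model.b_apply]

/-- The morphism to the model sending `x₁`, `x₂` to its generators `a`, `b`. -/
noncomputable def toModel (K : Type) [Field K] : lieL59 K →ₗ⁅K⁆ L59Model K :=
  lieIdealQuotientLift (LieSubmodule.lieSpan K _ (relators K))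
    (FreeLieAlgebra.lift K (modelGen K)) lieSpan_relators_le_ker_lift_modelGen

theorem toModel_mk (w : FreeLieAlgebra K (Fin 5)) :
    toModel K (mk K w) = FreeLieAlgebra.lift K (modelGen K) w := rfl

theorem toModel_gen (i : Fin 5) : toModel K (gen K i) = modelGen K i := by
  rw [gen, toModel_mk, FreeLieAlgebra.lift_of_apply]

theorem ofModel_modelGen (i : Fin 5) : ofModel K (modelGen K i) = gen K i := by
  rw [ofModel_apply]
  fin_cases i <;> simp [modelGen, L59Model.lie_apply, L59Model.a_apply, L59Model.b_apply]

theorem toModel_ofModel (v : L59Model K) : toModel K (ofModel K v) = v := by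
  simp only [ofModel_apply, map_add, map_smul, toModel_gen]
  exact (L59Model.eq_sum_commutators v).symm

theorem ofModel_toModel (z : lieL59 K) : ofModel K (toModel K z) = z := by
  have comp_eq : ((ofModel K).comp (toModel K)).comp (mk K) = mk K :=
    FreeLieAlgebra.hom_ext fun i => (congrArg _ (toModel_gen i)).trans (ofModel_modelGen i)
  obtain ⟨w, rfl⟩ := mk_surjective z
  exact LieHom.congr_fun comp_eq w

/-- The isomorphism of `L_{5,9}` with its coordinate model. -/
noncomputable def equivModel (K : Type) [Field K] : lieL59 K ≃ₗ⁅K⁆ L59Model K where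
  __ := toModel K
  invFun := ofModel K
  left_inv := ofModel_toModel
  right_inv := toModel_ofModel

end lieL59

/-- `L_{5,9}` is nilpotent of class `3` with `dim L² = 3`, its Schur
multiplier has dimension `3`, and with `n = 5`, `m = 3`, `c = 3` this equals
`(1/2)(n−m−1)(n+m) − Σ_{i=2}^{min(n−m,c)} (n−m−i) − 1`. -/
theorem schur_multiplier_L59 (K : Type) [Field K] :
    Module.finrank K (lieL59 K) = 5 ∧ lieDerivedDim K (lieL59 K) = 3 ∧
    lieNilpotencyClass K (lieL59 K) 3 ∧
    (∀ (X : Type) (π : FreeLieAlgebra K X →ₗ⁅K⁆ lieL59 K), Function.Surjective π →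
      lieSchurMultiplierDim K X π = 3) ∧
    (3 : ℤ) = raiBound 5 3 3 - 1 := by
  have e := lieL59.equivModel K
  refine ⟨?finrank, ?derived, ?nilpotencyClass, fun X π hπ => ?schurMultiplier, by decide⟩
  case finrank => exact e.toLinearEquiv.finrank_eq.trans (finrank_fin_fun K)
  case derived => rw [lieDerivedDim_congr e, L59Model.lieDerivedDim_eq_three]
  case nilpotencyClass =>
    exact (lieNilpotencyClass_congr e).2 (L59Model.lieNilpotencyClass_three K)
  case schurMultiplier =>
    have he_comp : Function.Surjective (e.toLieHom.comp π) := e.surjective.comp hπ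
    rw [← lieSchurMultiplierDim_equiv_comp e,
      L59Cover.isUniversalStemExtension_toModel.lieSchurMultiplierDim_eq he_comp,
      L59Cover.finrank_ker_toModel]
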